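/- arXiv:2411.10553 — 2 statements merged into one kernel-verified Lean document; each statement's English description precedes it below -/
import Mathlib

section
/- Let a > 1, set b_m := ⌊m^a⌋ for m ∈ ℕ, and let t : ℕ → [0,∞) satisfy t_j = 0 whenever j is not of the form b_m, and t_{b_m} → 0 as m → ∞. Then Σ_{j=1}^∞ t_j/j < ∞ and Σ_{j ≠ n} t_j/|n − j| → 0 as n → ∞. -/
/-!
Superadditivity of `b m = ⌊m ^ a⌋` spreads its values out as much as its own growth: if `b k` is the
last value not exceeding `n`, then `|b m - n| ≥ b (|m - k| - 1) + 1` unless `b m = n`. Hence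
`∑_{j ≠ n} |t j| / |j - n|` is at most the convolution of the null sequence `|t (b m)|` with the
weight `1 / (b (|i| - 1) + 1)`, which is summable over `i ∈ ℤ` because `∑ 1 / b m < ∞`. Such a
convolution tends to `0`, and `k → ∞` as `n → ∞`. The series `∑ t j / j` is the case `n = 0`.
-/

open Filter Topology

theorem exists_abs_le_of_tendsto {s : ℕ → ℝ} {c : ℝ} (hs : Tendsto s atTop (𝓝 c)) :
    ∃ C, ∀ m, |s m| ≤ C :=
  let ⟨C, hC⟩ := hs.abs.bddAbove_range
  ⟨C, fun m => hC ⟨m, rfl⟩⟩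

section Convolution

theorem tendsto_tsum_int_mul_comp_sub {s w : ℤ → ℝ} {C : ℝ} (hsC : ∀ k, |s k| ≤ C)
    (hs : Tendsto s atTop (𝓝 0)) (hw : Summable w) :
    Tendsto (fun N : ℤ => ∑' k, s k * w (k - N)) atTop (𝓝 0) := by
  have translate (N : ℤ) : ∑' k, s k * w (k - N) = ∑' i, s (i + N) * w i := by
    simpa using ((Equiv.addRight N).tsum_eq fun k => s k * w (k - N)).symm
  have pointwise (i : ℤ) : Tendsto (fun N : ℤ => s (i + N) * w i) atTop (𝓝 0) := by
    simpa using (hs.comp (tendsto_atTop_add_const_left atTop i tendsto_id)).mul_const (w i)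
  have dominated (N i : ℤ) : ‖s (i + N) * w i‖ ≤ C * |w i| := by
    rw [norm_mul]
    exact mul_le_mul_of_nonneg_right (hsC _) (abs_nonneg _)
  simpa [translate] using tendsto_tsum_of_dominated_convergence (hw.abs.mul_left C) pointwise
    (Eventually.of_forall dominated)

variable {s : ℕ → ℝ} {w : ℤ → ℝ}

theorem summable_mul_comp_sub {C : ℝ} (hsC : ∀ m, |s m| ≤ C) (hw : Summable w) (N : ℤ) :
    Summable fun m : ℕ => s m * w (m - N) := by
  have hinj : Function.Injective fun m : ℕ => (m : ℤ) - N :=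
    (sub_left_injective (b := N)).comp Nat.cast_injective
  refine Summable.of_norm_bounded ((hw.abs.comp_injective hinj).mul_left C) fun m => ?_
  rw [norm_mul]
  exact mul_le_mul_of_nonneg_right (hsC m) (abs_nonneg _)

theorem tendsto_tsum_mul_comp_sub (hs : Tendsto s atTop (𝓝 0)) (hw : Summable w) :
    Tendsto (fun N : ℤ => ∑' m : ℕ, s m * w (m - N)) atTop (𝓝 0) := by
  obtain ⟨C, hsC⟩ := exists_abs_le_of_tendsto hs
  let extension : ℤ → ℝ := fun k => if 0 ≤ k then s k.toNat else 0
  have hC : 0 ≤ C := (abs_nonneg _).trans (hsC 0)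
  have extension_le (k : ℤ) : |extension k| ≤ C := by
    by_cases hk : 0 ≤ k <;> simp [extension, hk, hsC, hC]
  have tendsto_extension : Tendsto extension atTop (𝓝 0) := by
    have htoNat : Tendsto Int.toNat atTop atTop :=
      tendsto_atTop.2 fun K => (eventually_ge_atTop (K : ℤ)).mono fun k hk => by omega
    refine (hs.comp htoNat).congr' ?_
    filter_upwards [eventually_ge_atTop 0] with k hk
    simp [extension, hk]
  have tsum_extension (N : ℤ) :
      ∑' k, extension k * w (k - N) = ∑' m : ℕ, s m * w (m - N) := by
    have hsupp : Function.support (fun k => extension k * w (k - N)) ⊆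
        Set.range ((↑) : ℕ → ℤ) := by
      intro k hk
      have hk0 : 0 ≤ k := by
        by_contra hneg
        simp [extension, hneg] at hk
      exact ⟨k.toNat, Int.toNat_of_nonneg hk0⟩
    simpa [extension] using ((Nat.cast_injective (R := ℤ)).tsum_eq hsupp).symm
  simpa only [tsum_extension] using tendsto_tsum_int_mul_comp_sub extension_le tendsto_extension hw

end Convolution

theorem exists_galoisConnection_of_strictMono {b : ℕ → ℕ} (hb : StrictMono b) (hb0 : b 0 = 0) :
    ∃ l : ℕ → ℕ, GaloisConnection b l := by
  refine ⟨fun n => Nat.findGreatest (fun k => b k ≤ n) n, fun k n => ⟨fun hk => ?_, fun hk => ?_⟩⟩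
  · exact Nat.le_findGreatest (hb.le_apply.trans hk) hk
  · refine (hb.monotone hk).trans ?_
    exact Nat.findGreatest_spec (P := fun k => b k ≤ n) n.zero_le (by simp [hb0])

theorem tendsto_atTop_of_galoisConnection {α β : Type*} [Preorder α] [Preorder β] {f : α → β}
    {g : β → α} (hfg : GaloisConnection f g) : Tendsto g atTop atTop :=
  tendsto_atTop.2 fun x => (eventually_ge_atTop (f x)).mono fun y => (hfg x y).1

/-- The weight `1 / (b (|i| - 1) + 1)` bounding `1 / |b m - n|` when `m` is `i` places away from
the last index `k` with `b k ≤ n`. The subtraction is truncated, so the weight at `i = 0` is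
`1 / (b 0 + 1)`. -/
noncomputable def gapWeight (b : ℕ → ℕ) (i : ℤ) : ℝ := ((b (i.natAbs - 1) : ℝ) + 1)⁻¹

theorem summable_gapWeight {b : ℕ → ℕ} (hb : StrictMono b)
    (hsum : Summable fun m => (b m : ℝ)⁻¹) : Summable (gapWeight b) := by
  have hshift : Summable fun m : ℕ => ((b (m - 1) : ℝ) + 1)⁻¹ := by
    rw [← summable_nat_add_iff 2]
    refine Summable.of_nonneg_of_le (fun m => by positivity) (fun m => ?_)
      ((summable_nat_add_iff 1).2 hsum)
    have hpos : 0 < b (m + 1) := (Nat.zero_le _).trans_lt (hb m.succ_pos)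
    gcongr
    simp
  exact Summable.of_nat_of_neg (by simpa [gapWeight] using hshift)
    (by simpa [gapWeight] using hshift)

section Superadditive

variable {b : ℕ → ℕ}

theorem map_zero_of_superadditive (hadd : ∀ x y, b x + b y ≤ b (x + y)) : b 0 = 0 := by
  simpa using hadd 0 0

theorem strictMono_of_superadditive (hadd : ∀ x y, b x + b y ≤ b (x + y)) (hb1 : 0 < b 1) :
    StrictMono b :=
  strictMono_nat_of_lt_succ fun m => (Nat.lt_add_of_pos_right hb1).trans_le (hadd m 1)

theorem map_natAbs_sub_one_lt_natAbs_sub {l : ℕ → ℕ} (hadd : ∀ x y, b x + b y ≤ b (x + y))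
    (hb1 : 0 < b 1) (hl : GaloisConnection b l) {m n : ℕ} (hne : b m ≠ n) :
    b (((m : ℤ) - l n).natAbs - 1) < ((b m : ℤ) - n).natAbs := by
  rcases le_or_gt m (l n) with hm | hm
  · obtain ⟨d, hd⟩ := Nat.exists_eq_add_of_le' hm
    have hn : b d + b m ≤ n := (hadd d m).trans ((hl _ _).2 hd.ge)
    have hdist : ((m : ℤ) - l n).natAbs = d := by omega
    rw [hdist]
    rcases d.eq_zero_or_pos with rfl | hpos
    · rw [Nat.zero_sub, map_zero_of_superadditive hadd]
      omega
    · have := strictMono_of_superadditive hadd hb1 (Nat.sub_one_lt_of_lt hpos)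
      omega
  · obtain ⟨d, rfl⟩ : ∃ d, m = d + (l n + 1) := Nat.exists_eq_add_of_le' hm
    have hn : n < b (l n + 1) := lt_of_not_ge fun h => (l n).not_succ_le_self ((hl _ _).1 h)
    have hdist : (((d + (l n + 1) : ℕ) : ℤ) - l n).natAbs - 1 = d := by omega
    rw [hdist]
    have := hadd d (l n + 1)
    omega

theorem inv_abs_sub_le_gapWeight {l : ℕ → ℕ} (hadd : ∀ x y, b x + b y ≤ b (x + y))
    (hb1 : 0 < b 1) (hl : GaloisConnection b l) {m n : ℕ} (hne : b m ≠ n) :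
    |(b m : ℝ) - n|⁻¹ ≤ gapWeight b (m - l n) := by
  have hdist : (b (((m : ℤ) - l n).natAbs - 1) : ℝ) + 1 ≤ |(b m : ℝ) - n| := by
    have := Nat.succ_le_of_lt (map_natAbs_sub_one_lt_natAbs_sub hadd hb1 hl hne)
    have hcast : (((b m : ℤ) - n).natAbs : ℝ) = |(b m : ℝ) - n| := by
      rw [Nat.cast_natAbs]
      push_cast
      rfl
    rw [← hcast]
    exact_mod_cast this
  exact inv_anti₀ (by positivity) hdist

end Superadditive

section OffDiagonal

/-- The `j`-th term of the series of `t j / |j - n|` over positive integers `j ≠ n`, extended by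
zero to all `j : ℕ`. -/
noncomputable def offDiagTerm (t : ℕ → ℝ) (n j : ℕ) : ℝ :=
  if 1 ≤ j ∧ j ≠ n then t j / |(j : ℝ) - n| else 0

variable {b : ℕ → ℕ} {t : ℕ → ℝ}

theorem support_offDiagTerm_subset (hsupp : ∀ j, 1 ≤ j → j ∉ Set.range b → t j = 0) (n : ℕ) :
    Function.support (offDiagTerm t n) ⊆ Set.range b := by
  intro j hj
  by_contra hjb
  refine hj ?_
  unfold offDiagTerm
  split_ifs with h
  · rw [hsupp j h.1 hjb, zero_div]
  · rfl

theorem norm_offDiagTerm_le {l : ℕ → ℕ} (hadd : ∀ x y, b x + b y ≤ b (x + y)) (hb1 : 0 < b 1)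
    (hl : GaloisConnection b l) (t : ℕ → ℝ) (m n : ℕ) :
    ‖offDiagTerm t n (b m)‖ ≤ |t (b m)| * gapWeight b (m - l n) := by
  unfold offDiagTerm
  split_ifs with h
  · rw [norm_div, Real.norm_eq_abs, Real.norm_eq_abs, abs_abs, div_eq_mul_inv]
    gcongr
    exact inv_abs_sub_le_gapWeight hadd hb1 hl h.2
  · have : 0 ≤ gapWeight b (m - l n) := by
      unfold gapWeight
      positivity
    simpa using mul_nonneg (abs_nonneg _) this

theorem summable_offDiagTerm {C : ℝ} (hadd : ∀ x y, b x + b y ≤ b (x + y)) (hb1 : 0 < b 1)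
    (hsum : Summable fun m => (b m : ℝ)⁻¹)
    (hsupp : ∀ j, 1 ≤ j → j ∉ Set.range b → t j = 0) (htC : ∀ m, |t (b m)| ≤ C) (n : ℕ) :
    Summable (offDiagTerm t n) := by
  have hmono := strictMono_of_superadditive hadd hb1
  obtain ⟨l, hl⟩ := exists_galoisConnection_of_strictMono hmono (map_zero_of_superadditive hadd)
  have hw := summable_gapWeight hmono hsum
  refine (hmono.injective.summable_iff fun j hj => ?_).1 (Summable.of_norm_bounded
    (summable_mul_comp_sub (by simpa using htC) hw (l n)) (norm_offDiagTerm_le hadd hb1 hl t · n))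
  exact Function.notMem_support.1 fun h => hj (support_offDiagTerm_subset hsupp n h)

theorem tendsto_tsum_offDiagTerm (hadd : ∀ x y, b x + b y ≤ b (x + y)) (hb1 : 0 < b 1)
    (hsum : Summable fun m => (b m : ℝ)⁻¹)
    (hsupp : ∀ j, 1 ≤ j → j ∉ Set.range b → t j = 0)
    (hlim : Tendsto (fun m => t (b m)) atTop (𝓝 0)) :
    Tendsto (fun n => ∑' j, offDiagTerm t n j) atTop (𝓝 0) := by
  have hmono := strictMono_of_superadditive hadd hb1
  obtain ⟨l, hl⟩ := exists_galoisConnection_of_strictMono hmono (map_zero_of_superadditive hadd)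
  have hw := summable_gapWeight hmono hsum
  have habs : Tendsto (fun m => |t (b m)|) atTop (𝓝 0) := by simpa using hlim.abs
  obtain ⟨C, hC⟩ := exists_abs_le_of_tendsto habs
  refine squeeze_zero_norm (fun n => ?_) ((tendsto_tsum_mul_comp_sub habs hw).comp
    (tendsto_natCast_atTop_atTop.comp (tendsto_atTop_of_galoisConnection hl)))
  rw [← hmono.injective.tsum_eq (support_offDiagTerm_subset hsupp n)]
  exact tsum_of_norm_bounded (summable_mul_comp_sub hC hw (l n)).hasSum
    (norm_offDiagTerm_le hadd hb1 hl t · n)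

end OffDiagonal

theorem superadditive_floor_rpow {a : ℝ} (ha : 1 ≤ a) (x y : ℕ) :
    ⌊(x : ℝ) ^ a⌋₊ + ⌊(y : ℝ) ^ a⌋₊ ≤ ⌊((x + y : ℕ) : ℝ) ^ a⌋₊ := by
  apply Nat.le_floor
  push_cast
  calc (⌊(x : ℝ) ^ a⌋₊ : ℝ) + ⌊(y : ℝ) ^ a⌋₊
      ≤ (x : ℝ) ^ a + (y : ℝ) ^ a := by
        gcongr <;> exact Nat.floor_le (by positivity)
    _ ≤ (x + y : ℝ) ^ a := Real.add_rpow_le_rpow_add x.cast_nonneg y.cast_nonneg ha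

theorem summable_inv_floor_rpow {a : ℝ} (ha : 1 < a) :
    Summable fun m : ℕ => (⌊(m : ℝ) ^ a⌋₊ : ℝ)⁻¹ := by
  have htop : Tendsto (fun m : ℕ => (m : ℝ) ^ a) atTop atTop :=
    (tendsto_rpow_atTop (by linarith)).comp tendsto_natCast_atTop_atTop
  have hequiv := (Asymptotics.isEquivalent_nat_floor (R := ℝ)).comp_tendsto htop |>.inv
  exact hequiv.summable_iff_nat.2 (Real.summable_nat_rpow_inv.2 ha)

theorem statement12_general {b : ℕ → ℕ} (hadd : ∀ x y, b x + b y ≤ b (x + y)) (hb1 : 0 < b 1)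
    (hsum : Summable fun m => (b m : ℝ)⁻¹) {t : ℕ → ℝ}
    (hsupp : ∀ j, 1 ≤ j → j ∉ Set.range b → t j = 0)
    (hlim : Tendsto (fun m => t (b m)) atTop (𝓝 0)) :
    (∀ n : ℕ, Summable fun j : ℕ => if 1 ≤ j ∧ j ≠ n then t j / |(j : ℝ) - n| else 0) ∧
    Tendsto (fun n : ℕ => ∑' j : ℕ, if 1 ≤ j ∧ j ≠ n then t j / |(j : ℝ) - n| else 0)
      atTop (𝓝 0) := by
  obtain ⟨C, hC⟩ := exists_abs_le_of_tendsto hlim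
  exact ⟨summable_offDiagTerm hadd hb1 hsum hsupp hC,
    tendsto_tsum_offDiagTerm hadd hb1 hsum hsupp hlim⟩

theorem statement12 (a : ℝ) (ha : 1 < a) (t : ℕ → ℝ) (ht0 : ∀ j, 0 ≤ t j)
    (hsupp : ∀ j : ℕ, 1 ≤ j → (¬ ∃ m : ℕ, 1 ≤ m ∧ ⌊(m : ℝ) ^ a⌋₊ = j) → t j = 0)
    (hlim : Filter.Tendsto (fun m : ℕ => t ⌊(m : ℝ) ^ a⌋₊) Filter.atTop (nhds 0)) :
    Summable (fun j : ℕ => if 1 ≤ j then t j / j else 0) ∧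
    Filter.Tendsto
      (fun n : ℕ => ∑' j : ℕ, if 1 ≤ j ∧ j ≠ n then t j / |(j : ℝ) - (n : ℝ)| else 0)
      Filter.atTop (nhds 0) := by
  have hsupp' (j : ℕ) (hj : 1 ≤ j) (hjb : j ∉ Set.range fun m : ℕ => ⌊(m : ℝ) ^ a⌋₊) : t j = 0 :=
    hsupp j hj fun ⟨m, _, hm⟩ => hjb ⟨m, hm⟩
  obtain ⟨hsum, htendsto⟩ := statement12_general (superadditive_floor_rpow ha.le) (by simp)
    (summable_inv_floor_rpow ha) hsupp' hlim
  exact ⟨by simpa [Nat.one_le_iff_ne_zero] using hsum 0, htendsto⟩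
end

section
/- For every γ > 1 there exists C > 0 such that for all integers n ≥ 3: Σ_{k ≥ 3, k ≠ n} 1/( (log k)^γ · |n − k| ) ≤ C/(log n)^{γ − 1}. -/
/-!
Split the sum at `√n` and `2n`. The terms with `k ≤ √n` are at most `2 / n` each, so together they
contribute `O(1 / √n)`. For `√n < k ≤ 2n` we have `log k ≥ log n / 2`, so this range contributes
`O((log n)^(-γ))` times the harmonic sum `∑ 1 / |n - k| = O(log n)`. For `k > 2n` we have
`|n - k| ≥ k / 2`, and `∑_{k > 2n} 1 / (k (log k)^γ)` is dominated by the telescoping differences of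
`(log k)^(1 - γ) / (γ - 1)`.
-/

open Finset Real

section

variable {γ : ℝ} {n k : ℕ} {s : Finset ℕ}

lemma one_le_log_of_three_le {x : ℝ} (hx : 3 ≤ x) : 1 ≤ log x := by
  rw [le_log_iff_exp_le (by linarith)]
  linarith [exp_one_lt_three]

lemma log_rpow_le_mul_sqrt {p x : ℝ} (hp : 0 < p) (hx : 1 ≤ x) :
    log x ^ p ≤ (2 * p) ^ p * √x := by
  have hx0 : 0 ≤ x := by linarith
  calc
    log x ^ p ≤ (x ^ (1 / (2 * p)) / (1 / (2 * p))) ^ p :=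
      rpow_le_rpow (log_nonneg hx) (log_le_rpow_div hx0 (by positivity)) hp.le
    _ = (2 * p) ^ p * x ^ (1 / (2 * p) * p) := by
      rw [div_div_eq_mul_div, div_one, mul_comm, mul_rpow (by positivity) (by positivity),
        ← rpow_mul hx0]
    _ = (2 * p) ^ p * √x := by
      rw [sqrt_eq_rpow]
      congr 2
      field_simp

lemma log_div_two_le_log_of_le_sq {x y : ℝ} (hx : 0 < x) (hxy : x ≤ y ^ 2) :
    log x / 2 ≤ log y := by
  have h : log x ≤ 2 * log y := by simpa using log_le_log hx hxy
  linarith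

lemma one_div_add_one_le_log_sub_log {x : ℝ} (hx : 0 < x) :
    1 / (x + 1) ≤ log (x + 1) - log x := by
  have h := one_sub_inv_le_log_of_pos (show 0 < (x + 1) / x by positivity)
  rw [log_div (by positivity) hx.ne', inv_div, one_sub_div (by positivity)] at h
  simpa using h

lemma one_add_mul_sub_one_le_rpow_of_nonpos {p x : ℝ} (hp : p ≤ 0) (hx : 0 < x) :
    1 + p * (x - 1) ≤ x ^ p := by
  calc
    1 + p * (x - 1) ≤ log x * p + 1 := by
      linarith [mul_le_mul_of_nonpos_left (log_le_sub_one_of_pos hx) hp]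
    _ ≤ exp (log x * p) := add_one_le_exp _
    _ = x ^ p := (rpow_def_of_pos hx p).symm

-- The tangent-line inequality at `b` for the convex function `x ↦ x ^ (1 - γ)`.
lemma sub_one_mul_sub_div_rpow_le (hγ : 1 ≤ γ) {a b : ℝ} (ha : 0 < a) (hb : 0 < b) :
    (γ - 1) * ((b - a) / b ^ γ) ≤ a ^ (1 - γ) - b ^ (1 - γ) := by
  have hbernoulli : 1 + (1 - γ) * (a / b - 1) ≤ (a / b) ^ (1 - γ) :=
    one_add_mul_sub_one_le_rpow_of_nonpos (by linarith) (by positivity)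
  rw [div_rpow ha.le hb.le, le_div_iff₀ (by positivity)] at hbernoulli
  have hscale : (1 - γ) * (a / b - 1) * b ^ (1 - γ) = (γ - 1) * ((b - a) / b ^ γ) := by
    rw [rpow_sub hb, rpow_one]
    field_simp
    ring
  linarith

lemma one_div_add_one_mul_log_rpow_le (hγ : 1 < γ) {x : ℝ} (hx : 1 < x) :
    1 / ((x + 1) * log (x + 1) ^ γ) ≤
      (log x ^ (1 - γ) - log (x + 1) ^ (1 - γ)) / (γ - 1) := by
  have hlog : 0 < log x := log_pos hx
  have hlog' : 0 < log (x + 1) := log_pos (by linarith)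
  rw [le_div_iff₀' (by linarith)]
  calc
    (γ - 1) * (1 / ((x + 1) * log (x + 1) ^ γ)) = (γ - 1) * (1 / (x + 1) / log (x + 1) ^ γ) := by
      rw [div_div]
    _ ≤ (γ - 1) * ((log (x + 1) - log x) / log (x + 1) ^ γ) := by
      have : 0 ≤ γ - 1 := by linarith
      gcongr
      exact one_div_add_one_le_log_sub_log (by linarith)
    _ ≤ log x ^ (1 - γ) - log (x + 1) ^ (1 - γ) :=
      sub_one_mul_sub_div_rpow_le hγ.le hlog hlog'

lemma sum_Ioc_one_div_mul_log_rpow_le (hγ : 1 < γ) {m M : ℕ} (hm : 1 < m) (hmM : m ≤ M) :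
    ∑ k ∈ Ioc m M, 1 / ((k : ℝ) * log k ^ γ) ≤
      (log m ^ (1 - γ) - log M ^ (1 - γ)) / (γ - 1) := by
  induction M, hmM using Nat.le_induction with
  | base => simp
  | succ M hmM ih =>
    have hstep := one_div_add_one_mul_log_rpow_le hγ (x := M) (by exact_mod_cast hm.trans_le hmM)
    rw [sum_Ioc_succ_top (by omega), Nat.cast_add_one]
    exact (add_le_add ih hstep).trans_eq (by ring)

lemma sum_one_div_mul_log_rpow_le (hγ : 1 < γ) {m : ℕ} (hm : 1 < m) (hs : ∀ k ∈ s, m < k) :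
    ∑ k ∈ s, 1 / ((k : ℝ) * log k ^ γ) ≤ log m ^ (1 - γ) / (γ - 1) := by
  set M := max m (s.sup id)
  have hsub : s ⊆ Ioc m M := fun k hk ↦
    mem_Ioc.2 ⟨hs k hk, (le_sup (f := id) hk).trans (le_max_right _ _)⟩
  have hlog (k : ℕ) : 0 ≤ log k := log_natCast_nonneg k
  calc
    ∑ k ∈ s, 1 / ((k : ℝ) * log k ^ γ) ≤ ∑ k ∈ Ioc m M, 1 / ((k : ℝ) * log k ^ γ) :=
      sum_le_sum_of_subset_of_nonneg hsub fun k _ _ ↦ by have := hlog k; positivity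
    _ ≤ (log m ^ (1 - γ) - log M ^ (1 - γ)) / (γ - 1) :=
      sum_Ioc_one_div_mul_log_rpow_le hγ hm (le_max_left _ _)
    _ ≤ log m ^ (1 - γ) / (γ - 1) := by
      have : 0 ≤ γ - 1 := by linarith
      gcongr
      exact sub_le_self _ (rpow_nonneg (hlog M) _)

lemma card_le_sqrt_of_forall_sq_le (hs : ∀ k ∈ s, 0 < k ∧ k ^ 2 ≤ n) :
    (#s : ℝ) ≤ √n := by
  have hsub : s ⊆ Icc 1 n.sqrt := fun k hk ↦
    mem_Icc.2 ⟨(hs k hk).1, Nat.le_sqrt'.2 (hs k hk).2⟩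
  have hcard : #s ≤ n.sqrt := by simpa using card_le_card hsub
  exact (Nat.cast_le.2 hcard).trans nat_sqrt_le_real_sqrt

-- The term `k = n` is `1 / 0 = 0`.
lemma sum_range_one_div_abs_sub (n : ℕ) :
    ∑ k ∈ range (2 * n + 1), 1 / |(n : ℝ) - k| = 2 * (harmonic n : ℝ) := by
  have hharmonic : (harmonic n : ℝ) = ∑ j ∈ range n, 1 / ((j : ℝ) + 1) := by simp [harmonic]
  have hbelow : ∑ k ∈ range n, 1 / |(n : ℝ) - k| = harmonic n := by
    rw [hharmonic, ← sum_range_reflect]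
    refine sum_congr rfl fun j hj ↦ ?_
    have hsub : ((n - 1 - j : ℕ) : ℝ) = n - (j + 1) := by
      rw [Nat.sub_sub, Nat.cast_sub (by grind)]
      push_cast
      ring
    rw [hsub, sub_sub_cancel, abs_of_nonneg (by positivity)]
  have habove : ∑ j ∈ range (n + 1), 1 / |(n : ℝ) - (n + j : ℕ)| = harmonic n := by
    have hdist (j : ℕ) : |(n : ℝ) - (n + j : ℕ)| = j := by simp
    simp only [hharmonic, hdist, sum_range_succ', Nat.cast_add_one, Nat.cast_zero, div_zero,
      add_zero]
  rw [two_mul, add_assoc, sum_range_add, hbelow, habove, two_mul]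

lemma sum_range_one_div_abs_sub_le (hn : 3 ≤ n) :
    ∑ k ∈ range (2 * n + 1), 1 / |(n : ℝ) - k| ≤ 4 * log n := by
  rw [sum_range_one_div_abs_sub]
  have hlog : 1 ≤ log n := one_le_log_of_three_le (by exact_mod_cast hn)
  linarith [harmonic_le_one_add_log n]

/-- The summand `1 / ((log k)^γ |n - k|)`. It vanishes on the diagonal `k = n`, because `1 / 0 = 0`,
so sums of it need not exclude `k = n`. -/
noncomputable def logKernel (γ : ℝ) (n k : ℕ) : ℝ :=
  1 / (log k ^ γ * |(n : ℝ) - (k : ℝ)|)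

lemma logKernel_nonneg (γ : ℝ) (n k : ℕ) : 0 ≤ logKernel γ n k := by
  have := log_natCast_nonneg k
  unfold logKernel
  positivity

lemma logKernel_le_two_div (hγ : 0 ≤ γ) (hk : 3 ≤ k) (hkn : k ^ 2 ≤ n) :
    logKernel γ n k ≤ 2 / n := by
  have hlog : 1 ≤ log k ^ γ := one_le_rpow (one_le_log_of_three_le (by exact_mod_cast hk)) hγ
  have hn : (0 : ℝ) < n := by exact_mod_cast (by nlinarith : 0 < n)
  have hdist : (n : ℝ) / 2 ≤ |(n : ℝ) - k| := by
    have : 2 * (k : ℝ) ≤ n := by exact_mod_cast (by nlinarith : 2 * k ≤ n)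
    linarith [le_abs_self ((n : ℝ) - k)]
  calc
    logKernel γ n k ≤ 1 / (1 * (n / 2)) := by unfold logKernel; gcongr
    _ = 2 / n := by rw [one_mul, one_div_div]

lemma sum_logKernel_le_of_sq_le (hγ : 1 < γ) (hn : 1 < n)
    (hs : ∀ k ∈ s, 3 ≤ k ∧ k ^ 2 ≤ n) :
    ∑ k ∈ s, logKernel γ n k ≤ 2 * (2 * (γ - 1)) ^ (γ - 1) / log n ^ (γ - 1) := by
  have hn' : (1 : ℝ) < n := by exact_mod_cast hn
  have hlog : 0 < log n := log_pos hn'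
  calc
    ∑ k ∈ s, logKernel γ n k ≤ #s • (2 / (n : ℝ)) :=
      sum_le_card_nsmul _ _ _ fun k hk ↦
        logKernel_le_two_div (by linarith) (hs k hk).1 (hs k hk).2
    _ ≤ √n * (2 / n) := by
      rw [nsmul_eq_mul]
      gcongr
      exact card_le_sqrt_of_forall_sq_le fun k hk ↦ ⟨by linarith [(hs k hk).1], (hs k hk).2⟩
    _ = 2 / √n := by
      rw [mul_div_left_comm, sqrt_div_self', mul_one_div]
    _ ≤ 2 * (2 * (γ - 1)) ^ (γ - 1) / log n ^ (γ - 1) := by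
      rw [div_le_div_iff₀ (by positivity) (by positivity), mul_assoc]
      gcongr
      exact log_rpow_le_mul_sqrt (by linarith) hn'.le

lemma logKernel_le_of_le_sq (hγ : 0 ≤ γ) (hn : 1 < n) (hkn : n ≤ k ^ 2) :
    logKernel γ n k ≤ 2 ^ γ / log n ^ γ * (1 / |(n : ℝ) - k|) := by
  have hlog : 0 < log n := log_pos (by exact_mod_cast hn)
  have hhalf : log n / 2 ≤ log k :=
    log_div_two_le_log_of_le_sq (by positivity) (by exact_mod_cast hkn)
  have hweight : 1 / log k ^ γ ≤ 2 ^ γ / log n ^ γ := calc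
    1 / log k ^ γ ≤ 1 / (log n / 2) ^ γ := by gcongr
    _ = 2 ^ γ / log n ^ γ := by rw [div_rpow hlog.le zero_le_two, one_div_div]
  calc
    logKernel γ n k = 1 / log k ^ γ * (1 / |(n : ℝ) - k|) := (one_div_mul_one_div _ _).symm
    _ ≤ 2 ^ γ / log n ^ γ * (1 / |(n : ℝ) - k|) := by gcongr

lemma sum_logKernel_le_of_le_sq_of_le_two_mul (hγ : 0 ≤ γ) (hn : 3 ≤ n)
    (hs : ∀ k ∈ s, n ≤ k ^ 2 ∧ k ≤ 2 * n) :
    ∑ k ∈ s, logKernel γ n k ≤ 4 * 2 ^ γ / log n ^ (γ - 1) := by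
  have hlog : 0 < log n := log_pos (by exact_mod_cast (by linarith : 1 < n))
  have hsub : s ⊆ range (2 * n + 1) := fun k hk ↦ mem_range.2 (Nat.lt_succ_of_le (hs k hk).2)
  calc
    ∑ k ∈ s, logKernel γ n k ≤ ∑ k ∈ s, 2 ^ γ / log n ^ γ * (1 / |(n : ℝ) - k|) :=
      sum_le_sum fun k hk ↦ logKernel_le_of_le_sq hγ (by linarith) (hs k hk).1
    _ = 2 ^ γ / log n ^ γ * ∑ k ∈ s, 1 / |(n : ℝ) - k| := (mul_sum _ _ _).symm
    _ ≤ 2 ^ γ / log n ^ γ * ∑ k ∈ range (2 * n + 1), 1 / |(n : ℝ) - k| := by gcongr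
    _ ≤ 2 ^ γ / log n ^ γ * (4 * log n) := by
      gcongr
      exact sum_range_one_div_abs_sub_le hn
    _ = 4 * 2 ^ γ / log n ^ (γ - 1) := by
      rw [rpow_sub_one hlog.ne']
      field_simp

lemma logKernel_le_of_two_mul_lt (hkn : 2 * n < k) :
    logKernel γ n k ≤ 2 * (1 / (k * log k ^ γ)) := by
  have hk : (0 : ℝ) < k := by exact_mod_cast (by omega : 0 < k)
  have := log_natCast_nonneg k
  have hdist : (k : ℝ) / 2 ≤ |(n : ℝ) - k| := by
    have : 2 * (n : ℝ) ≤ k := by exact_mod_cast hkn.le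
    linarith [neg_abs_le ((n : ℝ) - k)]
  calc
    logKernel γ n k = 1 / log k ^ γ * (1 / |(n : ℝ) - k|) := (one_div_mul_one_div _ _).symm
    _ ≤ 1 / log k ^ γ * (1 / (k / 2)) := by gcongr
    _ = 2 * (1 / (k * log k ^ γ)) := by
      rw [← one_div_mul_one_div, one_div_div]
      ring

lemma sum_logKernel_le_of_two_mul_lt (hγ : 1 < γ) (hn : 1 < n) (hs : ∀ k ∈ s, 2 * n < k) :
    ∑ k ∈ s, logKernel γ n k ≤ 2 / (γ - 1) / log n ^ (γ - 1) := by
  calc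
    ∑ k ∈ s, logKernel γ n k ≤ ∑ k ∈ s, 2 * (1 / (k * log k ^ γ)) :=
      sum_le_sum fun k hk ↦ logKernel_le_of_two_mul_lt (hs k hk)
    _ = 2 * ∑ k ∈ s, 1 / (k * log k ^ γ) := (mul_sum _ _ _).symm
    _ ≤ 2 * (log n ^ (1 - γ) / (γ - 1)) := by
      gcongr
      exact sum_one_div_mul_log_rpow_le hγ hn fun k hk ↦ by linarith [hs k hk]
    _ = 2 / (γ - 1) / log n ^ (γ - 1) := by
      rw [← neg_sub γ 1, rpow_neg (log_natCast_nonneg n)]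
      ring

lemma sum_logKernel_le (hγ : 1 < γ) (hn : 3 ≤ n) (hs : ∀ k ∈ s, 3 ≤ k) :
    ∑ k ∈ s, logKernel γ n k ≤
      (2 * (2 * (γ - 1)) ^ (γ - 1) + 4 * 2 ^ γ + 2 / (γ - 1)) / log n ^ (γ - 1) := by
  have hsmall := sum_logKernel_le_of_sq_le hγ (n := n) (by linarith)
    (s := {k ∈ s | k ^ 2 ≤ n}) (by grind)
  have hmiddle := sum_logKernel_le_of_le_sq_of_le_two_mul (γ := γ) (by linarith) hn
    (s := {k ∈ {k ∈ s | ¬k ^ 2 ≤ n} | k ≤ 2 * n}) (by grind)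
  have hlarge := sum_logKernel_le_of_two_mul_lt hγ (n := n) (by linarith)
    (s := {k ∈ {k ∈ s | ¬k ^ 2 ≤ n} | ¬k ≤ 2 * n}) (by grind)
  rw [← sum_filter_add_sum_filter_not s (· ^ 2 ≤ n),
    ← sum_filter_add_sum_filter_not {k ∈ s | ¬k ^ 2 ≤ n} (· ≤ 2 * n), add_div, add_div]
  linarith

end

theorem statement13 (γ : ℝ) (hγ : 1 < γ) :
    ∃ C > (0 : ℝ), ∀ n : ℕ, 3 ≤ n →
      (∑' k : ℕ, if 3 ≤ k ∧ k ≠ n then 1 / (Real.log k ^ γ * |(n : ℝ) - (k : ℝ)|) else 0)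
        ≤ C / Real.log n ^ (γ - 1) := by
  have : 0 < γ - 1 := by linarith
  refine ⟨2 * (2 * (γ - 1)) ^ (γ - 1) + 4 * 2 ^ γ + 2 / (γ - 1), by positivity, fun n hn ↦ ?_⟩
  refine Real.tsum_le_of_sum_range_le (fun k ↦ ?_) fun N ↦ ?_
  · exact ite_nonneg (logKernel_nonneg γ n k) le_rfl
  · rw [← sum_filter]
    exact sum_logKernel_le hγ hn fun k hk ↦ (mem_filter.1 hk).2.1
end
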